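/- arXiv:1508.01400 — 2 statements merged into one kernel-verified Lean document; each statement's English description precedes it below -/
import Mathlib

section
/- Let λ₁ ≥ 1, let Ω' ⊂ ℝ² be a simply connected domain, and let φ : 𝔻 → Ω' be a conformal (bijective holomorphic) map from the unit disk. If Q ⊂ 𝔻 is a λ₁-Whitney-type set in 𝔻, then φ(Q) is a λ₂-Whitney-type set in Ω', where λ₂ depends only on λ₁. -/
open Metric

/-- Distance between a set `A` and a set `B` (in the extended sense). -/
noncomputable def setDistE (A B : Set ℂ) : ENNReal := ⨅ a ∈ A, EMetric.infEdist a B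

/-- `A` is a `λ`-Whitney-type set in `Ω`: it is connected, contains a disk of radius
`diam(A)/λ`, and `diam(A)/λ ≤ dist(A, ∂Ω) ≤ λ · diam(A)`. -/
def IsWhitneyTypeE (Ω A : Set ℂ) (lam : ℝ) : Prop :=
  IsConnected A ∧
  (∃ c : ℂ, EMetric.closedBall c (EMetric.diam A / ENNReal.ofReal lam) ⊆ A) ∧
  EMetric.diam A / ENNReal.ofReal lam ≤ setDistE A (frontier Ω) ∧
  setDistE A (frontier Ω) ≤ ENNReal.ofReal lam * EMetric.diam A

open Set Filter Topology

lemma aux_bloch_local (h : ℂ → ℂ) (a : ℂ) (t : ℝ) (ht : 0 < t)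
    (hd : DifferentiableOn ℂ h (ball a t))
    (hb : ∀ z ∈ ball a t, ‖deriv h z‖ ≤ 2 * ‖deriv h a‖) (hm : deriv h a ≠ 0) :
    ball (h a) (t * ‖deriv h a‖ / 32) ⊆ h '' ball a t := by
  set m := ‖deriv h a‖ with hmdef
  have hmpos : 0 < m := norm_pos_iff.mpr hm
  have hdd : DifferentiableOn ℂ (deriv h) (ball a t) := hd.deriv isOpen_ball
  have hmaps : MapsTo (deriv h) (ball a t) (closedBall (deriv h a) (3 * m)) := by
    intro z hz
    rw [mem_closedBall, dist_eq_norm]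
    calc ‖deriv h z - deriv h a‖ ≤ ‖deriv h z‖ + ‖deriv h a‖ := norm_sub_le _ _
      _ ≤ 3 * m := by have := hb z hz; linarith
  have hsub : closedBall a (t / 8) ⊆ ball a t := closedBall_subset_ball (by linarith)
  have hder : ∀ z ∈ closedBall a (t / 8), ‖deriv h z - deriv h a‖ ≤ m / 2 := by
    intro z hz
    have h1 := Complex.dist_le_div_mul_dist_of_mapsTo_ball hdd hmaps (hsub hz)
    rw [dist_eq_norm] at h1
    have h2 : dist z a ≤ t / 8 := hz
    calc _ ≤ 3 * m / t * dist z a := h1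
      _ ≤ 3 * m / t * (t / 8) := by gcongr
      _ = 3 * m / 8 := by field_simp
      _ ≤ m / 2 := by linarith
  have hat : ∀ z ∈ ball a t, DifferentiableAt ℂ h z := fun z hz =>
    hd.differentiableAt (isOpen_ball.mem_nhds hz)
  have hlow : ∀ z ∈ sphere a (t / 8), m * t / 16 ≤ ‖h z - h a‖ := by
    intro z hz
    have hza : ‖z - a‖ = t / 8 := by rw [← dist_eq_norm]; exact hz
    have key := (convex_closedBall a (t / 8)).norm_image_sub_le_of_norm_hasDerivWithin_le
      (f := fun z => h z - deriv h a * z) (f' := fun z => deriv h z - deriv h a) (C := m / 2)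
      (x := a) (y := z)
      (fun x hx => by
        have := ((hat x (hsub hx)).hasDerivAt.sub ((hasDerivAt_id x).const_mul (deriv h a)))
        have h2 := this.hasDerivWithinAt (s := closedBall a (t / 8))
        rw [mul_one] at h2
        exact h2) hder (by simp; linarith) (sphere_subset_closedBall hz)
    have e1 : deriv h a * (z - a) = (h z - h a) - ((h z - deriv h a * z) - (h a - deriv h a * a)) := by
      ring
    have e2 : m * (t / 8) = ‖deriv h a * (z - a)‖ := by rw [norm_mul, hza]
    have e3 := norm_sub_le (h z - h a) ((h z - deriv h a * z) - (h a - deriv h a * a))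
    rw [← e1, ← e2] at e3
    rw [hza] at key
    linarith
  have hcl : DiffContOnCl ℂ h (ball a (t / 8)) := by
    apply DifferentiableOn.diffContOnCl
    exact hd.mono ((closure_ball_subset_closedBall).trans hsub)
  have hfreq : ∃ᶠ z in 𝓝 a, h z ≠ h a := by
    have h1 : ∀ᶠ z in 𝓝[≠] a, h z ≠ h a :=
      (hat a (mem_ball_self ht)).hasDerivAt.eventually_ne hm
    exact h1.frequently.filter_mono nhdsWithin_le_nhds
  have := hcl.ball_subset_image_closedBall (by linarith) hlow hfreq
  have e : m * t / 16 / 2 = t * m / 32 := by ring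
  rw [e] at this
  exact this.trans (image_mono hsub)

lemma aux_bloch (h : ℂ → ℂ) (c : ℂ) (r : ℝ) (hr : 0 < r)
    (hd : DifferentiableOn ℂ h (ball c r)) :
    ∃ p, ball p (r * ‖deriv h c‖ / 128) ⊆ h '' ball c r := by
  by_cases h0 : deriv h c = 0
  · exact ⟨0, by simp [h0]⟩
  have hdd : DifferentiableOn ℂ (deriv h) (ball c r) := hd.deriv isOpen_ball
  have hsub : closedBall c (r / 2) ⊆ ball c r := closedBall_subset_ball (by linarith)
  have hcont : ContinuousOn (fun z => ‖deriv h z‖ * (r / 2 - dist z c)) (closedBall c (r / 2)) := by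
    apply ContinuousOn.mul
    · exact (hdd.continuousOn.mono hsub).norm
    · fun_prop
  obtain ⟨a, ha, hmax⟩ := (isCompact_closedBall c (r / 2)).exists_isMaxOn
    ⟨c, mem_closedBall_self (by linarith)⟩ hcont
  have hmax' : ∀ z ∈ closedBall c (r / 2), ‖deriv h z‖ * (r / 2 - dist z c)
      ≤ ‖deriv h a‖ * (r / 2 - dist a c) := fun z hz => hmax hz
  have hc := hmax' c (mem_closedBall_self (by linarith))
  rw [dist_self, sub_zero] at hc
  have hcpos : 0 < ‖deriv h c‖ := norm_pos_iff.mpr h0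
  have hFpos : 0 < ‖deriv h a‖ * (r / 2 - dist a c) := lt_of_lt_of_le (by positivity) hc
  have hapos : 0 < ‖deriv h a‖ := by
    rcases (norm_nonneg (deriv h a)).eq_or_lt with h | h
    · rw [← h] at hFpos; simp at hFpos
    · exact h
  have htpos : 0 < r / 2 - dist a c := (pos_iff_pos_of_mul_pos hFpos).mp hapos
  set t := (r / 2 - dist a c) / 2 with ht
  have htp : 0 < t := by positivity
  have hin : ball a t ⊆ closedBall c (r / 2) := by
    intro z hz
    have h1 : dist z a < t := hz
    have h2 := dist_triangle z a c
    rw [mem_closedBall]; linarith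
  refine ⟨h a, ?_⟩
  have := aux_bloch_local h a t htp (hd.mono (hin.trans hsub)) ?_ (norm_pos_iff.mp hapos)
  · refine (ball_subset_ball ?_).trans (this.trans (image_mono (hin.trans hsub)))
    have : r / 2 - dist a c = 2 * t := by rw [ht]; ring
    rw [this] at hc
    nlinarith
  · intro z hz
    have h1 : dist z a < t := hz
    have h2 := dist_triangle z a c
    have h3 := hmax' z (hin hz)
    have h4 : t ≤ r / 2 - dist z c := by linarith
    have h5 : r / 2 - dist a c = 2 * t := by rw [ht]; ring
    rw [h5] at h3
    have h6 : ‖deriv h z‖ * t ≤ ‖deriv h a‖ * (2 * t) := le_trans (by gcongr) h3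
    nlinarith

lemma aux_log (f : ℂ → ℂ) (c : ℂ) (r : ℝ) (hr : 0 < r) (w : ℂ)
    (hd : DifferentiableOn ℂ f (ball c r)) (hw : ∀ z ∈ ball c r, f z ≠ w) :
    ∃ h : ℂ → ℂ, (∀ z ∈ ball c r, HasDerivAt h (deriv f z / (f z - w)) z) ∧
      ∀ z ∈ ball c r, f z - w = (f c - w) * Complex.exp (h z) := by
  have hg : DifferentiableOn ℂ (fun z => deriv f z / (f z - w)) (ball c r) :=
    (hd.deriv isOpen_ball).div (hd.sub_const w) (fun z hz => sub_ne_zero.mpr (hw z hz))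
  obtain ⟨h, hc0, hh⟩ := hg.isExactOn_ball.with_val_at c 0
  refine ⟨h, hh, fun z hz => ?_⟩
  have hder : ∀ x ∈ ball c r,
      HasDerivWithinAt (fun z => (f z - w) * Complex.exp (-h z)) 0 (ball c r) x := by
    intro x hx
    have h1 := (hd.differentiableAt (isOpen_ball.mem_nhds hx)).hasDerivAt.sub_const w
    have h2 := (hh x hx).neg.cexp
    have h3 := h1.mul h2
    have hne := sub_ne_zero.mpr (hw x hx)
    refine (h3.congr_deriv ?_).hasDerivWithinAt
    simp only [Pi.neg_apply]
    field_simp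
    ring
  have := (convex_ball c r).norm_image_sub_le_of_norm_hasDerivWithin_le (C := 0) hder (by simp)
    (mem_ball_self hr) hz
  rw [zero_mul, norm_le_zero_iff, sub_eq_zero] at this
  simp only [hc0, neg_zero, Complex.exp_zero, mul_one] at this
  rw [← this, mul_assoc, ← Complex.exp_add]
  simp

lemma aux_koebe (f : ℂ → ℂ) (c : ℂ) (r : ℝ) (hr : 0 < r) (w : ℂ)
    (hd : DifferentiableOn ℂ f (ball c r)) (hinj : InjOn f (ball c r))
    (hw : ∀ z ∈ ball c r, f z ≠ w) :
    r * ‖deriv f c‖ ≤ 1000 * ‖f c - w‖ := by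
  obtain ⟨h, hh, he⟩ := aux_log f c r hr w hd hw
  have hhd : DifferentiableOn ℂ h (ball c r) := fun z hz =>
    (hh z hz).differentiableAt.differentiableWithinAt
  obtain ⟨p, hp⟩ := aux_bloch h c r hr hhd
  have hcm := mem_ball_self (x := c) hr
  rw [(hh c hcm).deriv, norm_div] at hp
  have hpos : 0 < ‖f c - w‖ := norm_pos_iff.mpr (sub_ne_zero.mpr (hw c hcm))
  by_contra! hcon
  have hR : 7 < r * (‖deriv f c‖ / ‖f c - w‖) / 128 := by
    have : r * (‖deriv f c‖ / ‖f c - w‖) = r * ‖deriv f c‖ / ‖f c - w‖ := by ring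
    rw [this, lt_div_iff₀ (by norm_num), lt_div_iff₀ hpos]
    linarith
  obtain ⟨x, hx, hxp⟩ := hp (mem_ball_self (by linarith))
  have hmem : p + 2 * Real.pi * Complex.I ∈ ball p (r * (‖deriv f c‖ / ‖f c - w‖) / 128) := by
    rw [mem_ball, dist_eq_norm]
    have : ‖p + 2 * Real.pi * Complex.I - p‖ = 2 * Real.pi := by
      simp [abs_of_pos Real.pi_pos]
    rw [this]
    have := Real.pi_lt_d2
    linarith
  obtain ⟨y, hy, hyp⟩ := hp hmem
  have hxy : f x - w = f y - w := by
    rw [he x hx, he y hy, hxp, hyp, Complex.exp_periodic]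
  have : x = y := hinj hx hy (sub_left_injective hxy)
  rw [this, hyp] at hxp
  simp [Real.pi_ne_zero] at hxp

lemma aux_cover (f : ℂ → ℂ) (c : ℂ) (r : ℝ) (hr : 0 < r)
    (hd : DifferentiableOn ℂ f (ball c r)) (hinj : InjOn f (ball c r)) :
    ball (f c) (r * ‖deriv f c‖ / 1000) ⊆ f '' ball c r := by
  intro w hw
  by_contra hcon
  have := aux_koebe f c r hr w hd hinj (fun z hz h => hcon ⟨z, hz, h⟩)
  rw [mem_ball, dist_comm, dist_eq_norm] at hw
  linarith

lemma aux_inverse (f : ℂ → ℂ) (hd : DifferentiableOn ℂ f (ball 0 1))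
    (hinj : InjOn f (ball 0 1)) :
    ∃ g : ℂ → ℂ, (∀ z ∈ ball (0:ℂ) 1, g (f z) = z) ∧
      ∀ z ∈ ball (0:ℂ) 1, deriv f z ≠ 0 ∧ HasDerivAt g (deriv f z)⁻¹ (f z) := by
  set g := Function.invFunOn f (ball 0 1) with hg
  have hgf : ∀ z ∈ ball (0:ℂ) 1, g (f z) = z := fun z hz => hinj.leftInvOn_invFunOn hz
  have han : AnalyticOnNhd ℂ f (ball 0 1) := hd.analyticOnNhd isOpen_ball
  have hopen : ∀ s ⊆ ball (0:ℂ) 1, IsOpen s → IsOpen (f '' s) := by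
    rcases han.is_constant_or_isOpen (convex_ball (0:ℂ) 1).isPreconnected with ⟨w, hw⟩ | h
    · exfalso
      have h0 : (0:ℂ) ∈ ball (0:ℂ) 1 := by simp
      have h1 : (1/2:ℂ) ∈ ball (0:ℂ) 1 := by simp; norm_num
      have := hinj h0 h1 ((hw _ h0).trans (hw _ h1).symm)
      norm_num at this
    · exact h
  have hat : ∀ z ∈ ball (0:ℂ) 1, DifferentiableAt ℂ f z := fun z hz =>
    hd.differentiableAt (isOpen_ball.mem_nhds hz)
  have hcont : ∀ z ∈ ball (0:ℂ) 1, ContinuousAt g (f z) := by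
    intro z hz
    rw [continuousAt_def, hgf z hz]
    intro A hA
    obtain ⟨U, hUA, hUo, hzU⟩ := _root_.mem_nhds_iff.mp (inter_mem hA (isOpen_ball.mem_nhds hz))
    have : f '' U ∈ 𝓝 (f z) :=
      (hopen U (fun x hx => (hUA hx).2) hUo).mem_nhds ⟨z, hzU, rfl⟩
    refine mem_of_superset this ?_
    rintro _ ⟨x, hx, rfl⟩
    rw [mem_preimage, hgf x (hUA hx).2]
    exact (hUA hx).1
  have hright : ∀ z ∈ ball (0:ℂ) 1, ∀ᶠ y in 𝓝 (f z), f (g y) = y := by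
    intro z hz
    refine mem_of_superset ((hopen _ subset_rfl isOpen_ball).mem_nhds ⟨z, hz, rfl⟩) ?_
    rintro _ ⟨x, hx, rfl⟩
    change f (g (f x)) = f x
    rw [hgf x hx]
  have hstep : ∀ z ∈ ball (0:ℂ) 1, deriv f z ≠ 0 → HasDerivAt g (deriv f z)⁻¹ (f z) := by
    intro z hz hne
    refine HasDerivAt.of_local_left_inverse (hcont z hz) ?_ hne (hright z hz)
    rw [hgf z hz]
    exact (hat z hz).hasDerivAt
  have hne : ∀ z ∈ ball (0:ℂ) 1, deriv f z ≠ 0 := by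
    intro a ha h0
    have hanal : AnalyticAt ℂ (deriv f) a := (han a ha).deriv
    have hball := isOpen_ball.mem_nhds ha
    rcases hanal.eventually_eq_zero_or_eventually_ne_zero with hz | hz
    · obtain ⟨ε, hε, hb⟩ := Metric.mem_nhds_iff.mp (inter_mem hz hball)
      have hx : a + (ε / 2 : ℝ) ∈ ball a ε := by
        rw [mem_ball, dist_eq_norm]; simp [abs_of_pos hε]; linarith
      have := (convex_ball a ε).norm_image_sub_le_of_norm_hasDerivWithin_le (f := f)
        (f' := deriv f) (C := 0)
        (fun x hx => (hat x (hb hx).2).hasDerivAt.hasDerivWithinAt)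
        (fun x hx => by have h1 : deriv f x = 0 := (hb hx).1
                        simp [h1]) (mem_ball_self hε) hx
      rw [zero_mul, norm_le_zero_iff, sub_eq_zero] at this
      have := hinj (hb hx).2 ha this
      simp at this
      linarith
    · have hev : ∀ᶠ y in 𝓝[≠] (f a), DifferentiableAt ℂ g y := by
        rw [eventually_nhdsWithin_iff] at hz ⊢
        obtain ⟨U, hUA, hUo, haU⟩ := _root_.mem_nhds_iff.mp (inter_mem hz hball)
        refine mem_of_superset
          ((hopen U (fun x hx => (hUA hx).2) hUo).mem_nhds ⟨a, haU, rfl⟩) ?_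
        rintro _ ⟨x, hx, rfl⟩ hxa
        refine (hstep x (hUA hx).2 ((hUA hx).1 ?_)).differentiableAt
        rintro rfl
        exact hxa rfl
      have hga := (Complex.analyticAt_of_differentiable_on_punctured_nhds_of_continuousAt hev
        (hcont a ha)).differentiableAt.hasDerivAt
      have hcomp := hga.comp a (hat a ha).hasDerivAt
      have hid : HasDerivAt (g ∘ f) 1 a := by
        refine (hasDerivAt_id a).congr_of_eventuallyEq ?_
        filter_upwards [hball] with x hx
        exact hgf x hx
      have := hcomp.unique hid
      rw [h0] at this
      simp at this
  exact ⟨g, hgf, fun z hz => ⟨hne z hz, hstep z hz (hne z hz)⟩⟩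

lemma aux_sphere (c : ℂ) (hc : c ∈ ball (0:ℂ) 1) : ∃ e : ℂ, ‖e‖ = 1 ∧ ‖c - e‖ = 1 - ‖c‖ := by
  have hc1 : ‖c‖ < 1 := by simpa using hc
  by_cases h : c = 0
  · exact ⟨1, by simp, by simp [h]⟩
  · have hp : 0 < ‖c‖ := norm_pos_iff.mpr h
    refine ⟨((‖c‖⁻¹ : ℝ) : ℂ) * c, ?_, ?_⟩
    · rw [norm_mul, Complex.norm_real, norm_inv, norm_norm]; field_simp
    · have : c - ((‖c‖⁻¹ : ℝ) : ℂ) * c = ((1 - ‖c‖⁻¹ : ℝ) : ℂ) * c := by push_cast; ring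
      rw [this, norm_mul, Complex.norm_real, Real.norm_eq_abs, abs_of_nonpos]
      · field_simp; ring
      · have := (one_le_inv₀ hp).mpr hc1.le
        linarith

lemma aux_upper (f : ℂ → ℂ) (hd : DifferentiableOn ℂ f (ball 0 1))
    (hinj : InjOn f (ball 0 1)) (c : ℂ) (hc : c ∈ ball (0:ℂ) 1) (R : ℝ)
    (hR : ball (f c) R ⊆ f '' ball 0 1) :
    R ≤ 1000 * ‖deriv f c‖ * (1 - ‖c‖) := by
  have hc1 : ‖c‖ < 1 := by simpa using hc
  have h1c : 0 < 1 - ‖c‖ := by linarith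
  rcases le_or_gt R 0 with h0 | h0
  · exact h0.trans (by positivity)
  obtain ⟨g, hgf, hg⟩ := aux_inverse f hd hinj
  obtain ⟨e, he1, he⟩ := aux_sphere c hc
  have key := aux_koebe g (f c) R h0 e
    (fun y hy => by
      obtain ⟨x, hx, rfl⟩ := hR hy
      exact (hg x hx).2.differentiableAt.differentiableWithinAt)
    (fun y hy y' hy' h => by
      obtain ⟨x, hx, rfl⟩ := hR hy
      obtain ⟨x', hx', rfl⟩ := hR hy'
      rw [hgf x hx, hgf x' hx'] at h
      rw [h])
    (fun y hy h => by
      obtain ⟨x, hx, rfl⟩ := hR hy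
      rw [hgf x hx] at h
      rw [h] at hx
      simp [he1] at hx)
  rw [(hg c hc).2.deriv, hgf c hc, he, norm_inv] at key
  have hp : 0 < ‖deriv f c‖ := norm_pos_iff.mpr (hg c hc).1
  rw [← div_eq_mul_inv, div_le_iff₀ hp] at key
  linarith

lemma aux_harnack (f : ℂ → ℂ) (hd : DifferentiableOn ℂ f (ball 0 1))
    (hinj : InjOn f (ball 0 1)) (w : ℂ) (hw : ∀ z ∈ ball (0:ℂ) 1, f z ≠ w) (d L : ℝ) (hd0 : 0 < d)
    (z z' : ℂ) (hz : ‖z‖ ≤ 1 - d) (hz' : ‖z'‖ ≤ 1 - d) (hzz : ‖z' - z‖ ≤ L * d) :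
    ‖f z' - w‖ ≤ Real.exp (1000 * L) * ‖f z - w‖ := by
  obtain ⟨h, hh, he⟩ := aux_log f 0 1 one_pos w hd hw
  have hsub : closedBall (0:ℂ) (1 - d) ⊆ ball 0 1 := closedBall_subset_ball (by linarith)
  have hz1 : z ∈ closedBall (0:ℂ) (1 - d) := by simpa using hz
  have hz2 : z' ∈ closedBall (0:ℂ) (1 - d) := by simpa using hz'
  have hb : ∀ x ∈ closedBall (0:ℂ) (1 - d), ‖deriv f x / (f x - w)‖ ≤ 1000 / d := by
    intro x hx
    have hx1 : ball x d ⊆ ball 0 1 := by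
      apply ball_subset_ball'
      have : dist x 0 ≤ 1 - d := hx
      linarith
    have := aux_koebe f x d hd0 w (hd.mono hx1) (hinj.mono hx1) (fun z hz => hw z (hx1 hz))
    have hp : 0 < ‖f x - w‖ := norm_pos_iff.mpr (sub_ne_zero.mpr (hw x (hsub hx)))
    rw [norm_div, div_le_div_iff₀ hp hd0]
    linarith
  have key := (convex_closedBall (0:ℂ) (1 - d)).norm_image_sub_le_of_norm_hasDerivWithin_le
    (fun x hx => (hh x (hsub hx)).hasDerivWithinAt) hb hz1 hz2
  have key2 : ‖h z' - h z‖ ≤ 1000 * L := by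
    calc _ ≤ 1000 / d * ‖z' - z‖ := key
      _ ≤ 1000 / d * (L * d) := by gcongr
      _ = 1000 * L := by field_simp
  have e : f z' - w = Complex.exp (h z' - h z) * (f z - w) := by
    rw [he z' (hsub hz2), he z (hsub hz1), Complex.exp_sub]
    field_simp [Complex.exp_ne_zero]
  rw [e, norm_mul, Complex.norm_exp]
  gcongr
  exact (Complex.re_le_norm _).trans key2

lemma aux_infEDist (f : ℂ → ℂ) (hd : DifferentiableOn ℂ f (ball 0 1))
    (hinj : InjOn f (ball 0 1)) (hΩo : IsOpen (f '' ball 0 1))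
    (c : ℂ) (hc : c ∈ ball (0:ℂ) 1) (ρ : ℝ)
    (hρ : 1000 * ‖deriv f c‖ * (1 - ‖c‖) ≤ ρ) :
    Metric.infEDist (f c) (frontier (f '' ball 0 1)) ≤ ENNReal.ofReal ρ := by
  by_contra! hcon
  have hc1 : ‖c‖ < 1 := by simpa using hc
  have h1c : 0 < 1 - ‖c‖ := by linarith
  have hρ0 : 0 ≤ ρ := le_trans (by positivity) hρ
  obtain ⟨R, hR1, hR2⟩ := ENNReal.lt_iff_exists_real_btwn.mp hcon
  obtain ⟨hR2, hR3⟩ := hR2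
  have hRρ : ρ < R := (ENNReal.ofReal_lt_ofReal_iff_of_nonneg hρ0).mp hR2
  have hsub : ball (f c) R ⊆ f '' ball 0 1 := by
    by_contra hns
    obtain ⟨x, hx, hxn⟩ := not_subset.mp hns
    have hpre : IsPreconnected (ball (f c) R) := (convex_ball _ _).isPreconnected
    have hex : ∃ y ∈ ball (f c) R, y ∈ frontier (f '' ball 0 1) := by
      by_contra! hno
      have hcl : ∀ y ∈ ball (f c) R, y ∉ f '' ball 0 1 → y ∈ (closure (f '' ball 0 1))ᶜ := by
        intro y hy hyn hyc
        refine hno y hy ?_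
        rw [hΩo.frontier_eq]
        exact ⟨hyc, hyn⟩
      obtain ⟨y, -, hy1, hy2⟩ := hpre (f '' ball 0 1) (closure (f '' ball 0 1))ᶜ hΩo
        isClosed_closure.isOpen_compl
        (fun y hy => by
          by_cases h : y ∈ f '' ball 0 1
          · exact Or.inl h
          · exact Or.inr (hcl y hy h))
        ⟨f c, mem_ball_self (by linarith), c, hc, rfl⟩ ⟨x, hx, hcl x hx hxn⟩
      exact hy2 (subset_closure hy1)
    obtain ⟨y, hy, hyf⟩ := hex
    have h1 := Metric.infEDist_le_edist_of_mem (x := f c) hyf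
    rw [edist_dist] at h1
    have h2 : dist (f c) y < R := by rw [dist_comm]; exact hy
    have h3 := ENNReal.ofReal_le_ofReal h2.le
    exact absurd (hR3.trans_le (h1.trans h3)) (lt_irrefl _)
  have := aux_upper f hd hinj c hc R hsub
  linarith

theorem stmt3 (lam₁ : ℝ) (hlam₁ : 1 ≤ lam₁) :
    ∃ lam₂ : ℝ, 1 ≤ lam₂ ∧
      ∀ (Ω' : Set ℂ) (φ : ℂ → ℂ) (Q : Set ℂ),
        IsOpen Ω' → IsConnected Ω' → SimplyConnectedSpace Ω' →
        DifferentiableOn ℂ φ (ball 0 1) → Set.InjOn φ (ball 0 1) →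
        φ '' ball 0 1 = Ω' →
        Q ⊆ ball 0 1 → IsWhitneyTypeE (ball 0 1) Q lam₁ →
        IsWhitneyTypeE Ω' (φ '' Q) lam₂ := by
  set E := Real.exp (1000 * lam₁) with hE
  have hE1 : 1 ≤ E := Real.one_le_exp (by linarith)
  set M := 2 * E with hM
  have hM1 : 1 ≤ M := by linarith
  have hll : 1 ≤ lam₁ * (lam₁ + 1) := by nlinarith
  have hMl : 1 ≤ M * (lam₁ * (lam₁ + 1)) := by nlinarith
  set lam₂ := 2000000 * (M * (lam₁ * (lam₁ + 1))) with hlam₂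
  have hl2 : 1 ≤ lam₂ := by linarith
  have hMl2 : M ≤ lam₂ := by nlinarith
  refine ⟨lam₂, hl2, ?_⟩
  rintro Ω φ Q hΩo - - hd hinj rfl hQ ⟨hconn, ⟨c, hball⟩, hlow, hup⟩
  have hlp : 0 < lam₁ := by linarith
  have hl2p : 0 < lam₂ := by linarith
  have hMp : 0 < M := by linarith
  -- real diameter
  have hQb : Bornology.IsBounded Q := isBounded_ball.subset hQ
  set D := Metric.diam Q with hD
  have hDE : EMetric.diam Q = ENNReal.ofReal D := by
    rw [hD, Metric.diam, ENNReal.ofReal_toReal hQb.ediam_ne_top]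
    rfl
  have hD0 : 0 ≤ D := Metric.diam_nonneg
  rw [hDE, ← ENNReal.ofReal_div_of_pos hlp] at hball hlow
  rw [hDE, ← ENNReal.ofReal_mul hlp.le] at hup
  have hcQ : c ∈ Q := hball (by
    change edist c c ≤ _
    simp)
  have hcb := hQ hcQ
  have hc1 : ‖c‖ < 1 := by simpa using hcb
  have hfr : frontier (ball (0:ℂ) 1) = sphere 0 1 := frontier_ball _ one_ne_zero
  have hdQ : ∀ z ∈ Q, ‖z‖ ≤ 1 - D / lam₁ := by
    intro z hz
    obtain ⟨e, he1, he⟩ := aux_sphere z (hQ hz)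
    have h1 : setDistE Q (frontier (ball 0 1)) ≤ ENNReal.ofReal (1 - ‖z‖) := by
      refine (iInf₂_le z hz).trans ?_
      rw [← he, ← dist_eq_norm, ← edist_dist]
      apply Metric.infEDist_le_edist_of_mem
      rw [hfr]; simpa using he1
    have hz1 : ‖z‖ < 1 := by simpa using hQ hz
    have h2 := (ENNReal.ofReal_le_ofReal_iff (by linarith)).mp (hlow.trans h1)
    linarith
  have hcD : 1 - ‖c‖ ≤ (lam₁ + 1) * D := by
    have h1 : ENNReal.ofReal (1 - ‖c‖ - D) ≤ setDistE Q (frontier (ball 0 1)) := by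
      refine le_iInf₂ fun a ha => Metric.le_infEDist.mpr fun e he => ?_
      rw [hfr] at he
      have he1 : ‖e‖ = 1 := by simpa using he
      rw [edist_dist]
      apply ENNReal.ofReal_le_ofReal
      have h2 : dist a c ≤ D := Metric.dist_le_diam_of_mem hQb ha hcQ
      have h3 := norm_sub_norm_le e a
      have h4 := norm_sub_norm_le a c
      rw [← dist_eq_norm] at h3 h4
      rw [dist_comm] at h3
      linarith
    have h2 := (ENNReal.ofReal_le_ofReal_iff (by positivity)).mp (h1.trans hup)
    linarith
  have hDp : 0 < D := by
    rcases hD0.eq_or_lt with h | h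
    · rw [← h] at hcD; linarith
    · exact h
  obtain ⟨g, -, hg⟩ := aux_inverse φ hd hinj
  set m := ‖deriv φ c‖ with hm
  have hmp : 0 < m := norm_pos_iff.mpr (hg c hcb).1
  set ρ := 1000 * m * ((lam₁ + 1) * D) with hρ
  set σ := D / lam₁ * m / 1000 with hσ
  have hσp : 0 < σ := by positivity
  have hρσ : ρ = 1000000 * (lam₁ * (lam₁ + 1)) * σ := by
    rw [hρ, hσ]; field_simp; ring
  have hinf : Metric.infEDist (φ c) (frontier (φ '' ball 0 1)) ≤ ENNReal.ofReal ρ :=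
    aux_infEDist φ hd hinj hΩo c hcb ρ (by rw [hρ]; gcongr)
  have hdisk : closedBall c (D / lam₁) ⊆ Q := by
    intro y hy
    apply hball
    change edist y c ≤ _
    rw [edist_dist]
    exact ENNReal.ofReal_le_ofReal hy
  have hbQ : ball c (D / lam₁) ⊆ Q := ball_subset_closedBall.trans hdisk
  have hcover : ball (φ c) σ ⊆ φ '' Q :=
    (aux_cover φ c (D / lam₁) (by positivity) (hd.mono (hbQ.trans hQ))
      (hinj.mono (hbQ.trans hQ))).trans (image_mono hbQ)
  -- Harnack
  have hfrn : ∀ w ∈ frontier (φ '' ball 0 1), ∀ z ∈ ball (0:ℂ) 1, φ z ≠ w := by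
    intro w hw z hz h
    rw [hΩo.frontier_eq] at hw
    exact hw.2 ⟨z, hz, h⟩
  have hdiam : ∀ z ∈ Q, ∀ w ∈ frontier (φ '' ball 0 1),
      EMetric.diam (φ '' Q) ≤ ENNReal.ofReal M * edist (φ z) w := by
    intro z hz w hw
    apply Metric.ediam_le
    rintro _ ⟨x, hx, rfl⟩ _ ⟨y, hy, rfl⟩
    have H : ∀ x ∈ Q, ‖φ x - w‖ ≤ E * ‖φ z - w‖ := by
      intro x hx
      refine aux_harnack φ hd hinj w (hfrn w hw) (D / lam₁) lam₁ (by positivity) z x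
        (hdQ z hz) (hdQ x hx) ?_
      have : dist x z ≤ D := Metric.dist_le_diam_of_mem hQb hx hz
      rw [← dist_eq_norm]
      have e : lam₁ * (D / lam₁) = D := by field_simp
      rw [e]; exact this
    rw [edist_dist, edist_dist, ← ENNReal.ofReal_mul hMp.le]
    apply ENNReal.ofReal_le_ofReal
    have h1 := dist_triangle_right (φ x) (φ y) w
    rw [dist_eq_norm (φ x) w, dist_eq_norm (φ y) w] at h1
    have h2 := H x hx
    have h3 := H y hy
    rw [dist_eq_norm (φ z) w]
    calc _ ≤ _ := h1
      _ ≤ E * ‖φ z - w‖ + E * ‖φ z - w‖ := add_le_add h2 h3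
      _ = M * ‖φ z - w‖ := by rw [hM]; ring
  have hMne : ENNReal.ofReal M ≠ 0 := by simpa using hMp
  have hdiv : ∀ z ∈ Q, EMetric.diam (φ '' Q) / ENNReal.ofReal M ≤
      Metric.infEDist (φ z) (frontier (φ '' ball 0 1)) := by
    intro z hz
    refine Metric.le_infEDist.mpr fun w hw => ?_
    exact ENNReal.div_le_of_le_mul' (hdiam z hz w hw)
  have hdρ : EMetric.diam (φ '' Q) ≤ ENNReal.ofReal (M * ρ) := by
    rw [ENNReal.ofReal_mul hMp.le]
    have := (hdiv c hcQ).trans hinf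
    rwa [ENNReal.div_le_iff' hMne ENNReal.ofReal_ne_top] at this
  have hMρ : M * ρ / lam₂ = σ / 2 := by
    rw [hρσ, hlam₂]; field_simp; norm_num
  refine ⟨hconn.image φ (hd.continuousOn.mono hQ), ⟨φ c, ?_⟩, ?_, ?_⟩
  · refine Subset.trans ?_ hcover
    intro y hy
    have hy1 : edist y (φ c) ≤ EMetric.diam (φ '' Q) / ENNReal.ofReal lam₂ := hy
    have h2 : EMetric.diam (φ '' Q) / ENNReal.ofReal lam₂ ≤ ENNReal.ofReal (σ / 2) := by
      rw [← hMρ, ENNReal.ofReal_div_of_pos hl2p]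
      gcongr
    have h3 := hy1.trans h2
    rw [edist_dist, ENNReal.ofReal_le_ofReal_iff (by positivity)] at h3
    rw [mem_ball]; linarith
  · refine le_iInf₂ ?_
    rintro _ ⟨z, hz, rfl⟩
    refine le_trans ?_ (hdiv z hz)
    gcongr
  · have h1 : setDistE (φ '' Q) (frontier (φ '' ball 0 1)) ≤ ENNReal.ofReal ρ :=
      (iInf₂_le (φ c) ⟨c, hcQ, rfl⟩).trans hinf
    have hmem : φ c + (σ / 2 : ℝ) ∈ ball (φ c) σ := by
      rw [mem_ball, dist_eq_norm]; simp [abs_of_pos hσp]; linarith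
    have h2 : ENNReal.ofReal (σ / 2) ≤ EMetric.diam (φ '' Q) := by
      have := Metric.edist_le_ediam_of_mem (hcover hmem) (hcover (mem_ball_self hσp))
      rw [edist_dist, dist_eq_norm] at this
      have e : ‖φ c + (σ / 2 : ℝ) - φ c‖ = σ / 2 := by
        rw [add_sub_cancel_left, Complex.norm_real, Real.norm_eq_abs, abs_of_pos (by positivity)]
      rwa [e] at this
    calc _ ≤ ENNReal.ofReal ρ := h1
      _ ≤ ENNReal.ofReal (lam₂ * (σ / 2)) := by
        apply ENNReal.ofReal_le_ofReal
        rw [hρσ, hlam₂]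
        have : lam₁ * (lam₁ + 1) ≤ M * (lam₁ * (lam₁ + 1)) := by nlinarith
        nlinarith
      _ = ENNReal.ofReal lam₂ * ENNReal.ofReal (σ / 2) := ENNReal.ofReal_mul hl2p.le
      _ ≤ _ := by gcongr
end

section
/- Let Ω ⊂ ℝ² be a Jordan domain. Then there exists a sequence of Lipschitz domains (G_s) with Ω ⊂⊂ G_{s+1} ⊂⊂ G_s for all s and dist_H(∂G_s, ∂Ω) → 0 as s → ∞, where dist_H denotes Hausdorff distance. One such construction: G_s is the complement in ℝ² of the union of all closed Whitney squares of the unbounded complementary component of Ω whose side length exceeds 2^{-s}. -/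
open MeasureTheory Filter Set Metric

/-- The Euclidean plane `ℝ²`. -/
abbrev E2 : Type := EuclideanSpace ℝ (Fin 2)

/-- `Ω` is a Jordan domain: the bounded connected component of the complement of a
Jordan curve (a continuous injective image of the circle `ℝ/ℤ`). -/
def IsJordanDomain (Ω : Set E2) : Prop :=
  ∃ γ : AddCircle (1 : ℝ) → E2, Continuous γ ∧ Function.Injective γ ∧
    Bornology.IsBounded Ω ∧
    ∃ x ∈ (Set.range γ)ᶜ, Ω = connectedComponentIn (Set.range γ)ᶜ x

/-- `G` is a Lipschitz domain: a bounded domain whose boundary is, locally and in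
suitable orthonormal coordinates (a rigid motion `e`), the subgraph of a Lipschitz
function. -/
def IsLipschitzDomain (G : Set E2) : Prop :=
  IsOpen G ∧ IsConnected G ∧ Bornology.IsBounded G ∧
  ∀ x ∈ frontier G, ∃ U ∈ nhds x, ∃ (f : ℝ → ℝ) (K : NNReal) (e : E2 ≃ᵢ E2),
    LipschitzWith K f ∧ e '' (G ∩ U) = (e '' U) ∩ {y : E2 | y 1 < f (y 0)}


lemma aux_log_s18 {A : Type*} [TopologicalSpace A] [SimplyConnectedSpace A]
    [LocallyPathConnectedSpace A] (f : C(A, ℂ)) (hf : ∀ a, f a ≠ 0) :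
    ∃ g : C(A, ℂ), ∀ a, Complex.exp (g a) = f a := by
  obtain ⟨a₀⟩ : Nonempty A := inferInstance
  obtain ⟨g, ⟨-, hg⟩, -⟩ := Complex.isCoveringMapOn_exp.existsUnique_continuousMap_lifts f
    (a₀ := a₀) (e₀ := Complex.log (f a₀)) (Complex.exp_log (hf a₀)) (fun a => hf a)
  exact ⟨g, fun a => congrFun hg a⟩

lemma aux_crossing {X : Type*} [TopologicalSpace X] {t s : Set X} (ht : IsPreconnected t)
    (h1 : (t ∩ s).Nonempty) (h2 : (t ∩ sᶜ).Nonempty) : (t ∩ frontier s).Nonempty := by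
  by_contra hcon
  rw [not_nonempty_iff_eq_empty] at hcon
  have hd : ∀ x ∈ t, x ∈ interior s ∨ x ∈ interior sᶜ := by
    intro x hx
    have : x ∉ frontier s := fun h => by
      have : x ∈ t ∩ frontier s := ⟨hx, h⟩
      rw [hcon] at this; exact this
    rw [frontier, Set.mem_sdiff, not_and_not_right] at this
    by_cases hc : x ∈ closure s
    · exact Or.inl (this hc)
    · right; rw [interior_compl]; exact hc
  obtain ⟨a, hat, has⟩ := h1
  obtain ⟨b, hbt, hbs⟩ := h2
  obtain ⟨z, _, hz1, hz2⟩ := ht _ _ isOpen_interior isOpen_interior hd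
    ⟨a, hat, (hd a hat).resolve_right fun h => interior_subset h has⟩
    ⟨b, hbt, (hd b hbt).resolve_left fun h => hbs (interior_subset h)⟩
  exact interior_subset hz2 (interior_subset hz1)

/-- no continuous logarithm on a big circle -/
lemma aux_no_log (g : C(ℂ, ℂ)) (w : ℂ) (R : ℝ) (hR : 0 < R)
    (h : ∀ z, dist z w = R → Complex.exp (g z) = z - w) : False := by
  let z : ℝ → ℂ := fun t => w + R * Complex.exp (t * Complex.I)
  have hz : ∀ t, dist (z t) w = R := by
    intro t; simp [z, dist_eq_norm, Complex.norm_exp_ofReal_mul_I, abs_of_pos hR]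
  let u : ℝ → ℂ := fun t => (g (z t) - Real.log R - t * Complex.I) / (2 * Real.pi * Complex.I)
  have hu : Continuous u := by fun_prop
  have hint : ∀ t, ∃ n : ℤ, u t = n := by
    intro t
    have : Complex.exp (g (z t) - Real.log R - t * Complex.I) = 1 := by
      rw [Complex.exp_sub, Complex.exp_sub, h _ (hz t), ← Complex.ofReal_exp, Real.exp_log hR]
      have h1 : (R : ℂ) ≠ 0 := by exact_mod_cast hR.ne'
      have h2 := Complex.exp_ne_zero (t * Complex.I)
      simp only [z]; field_simp; ring
    obtain ⟨n, hn⟩ := Complex.exp_eq_one_iff.1 this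
    refine ⟨n, ?_⟩
    simp only [u]; rw [hn]
    exact mul_div_cancel_right₀ _ Complex.two_pi_I_ne_zero
  choose n hn using hint
  have hnc : Continuous n := by
    have : Continuous fun t => ((n t : ℤ) : ℝ) := by
      have h3 : (fun t => ((n t : ℤ) : ℝ)) = fun t => (u t).re := by
        ext t; rw [hn]; simp
      rw [h3]; exact Complex.continuous_re.comp hu
    exact Int.isClosedEmbedding_coe_real.isEmbedding.continuous_iff.2 this
  have hconst : n 0 = n (2 * Real.pi) := PreconnectedSpace.constant inferInstance hnc
  have e0 := hn 0
  have e1 := hn (2 * Real.pi)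
  have hzz : z (2 * Real.pi) = z 0 := by
    simp [z]
  rw [← hconst, ← e0] at e1
  simp only [u, hzz] at e1
  have := Complex.two_pi_I_ne_zero
  rw [div_left_inj' this] at e1
  push_cast at e1
  apply this
  linear_combination -e1

/-- an arc does not bound a bounded open set -/
lemma aux_arc {a b : ℝ} (e : Icc a b → ℂ) (he : Continuous e) (hinj : Function.Injective e)
    {W : Set ℂ} (hb : Bornology.IsBounded W) (hfr : frontier W ⊆ range e)
    (hdis : Disjoint W (range e)) (hab : a ≤ b) : W = ∅ := by
  by_contra hne
  obtain ⟨w, hw⟩ := nonempty_iff_ne_empty.2 hne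
  have hcl : Topology.IsClosedEmbedding e := he.isClosedEmbedding hinj
  have hew : ∀ t, e t - w ≠ 0 := fun t ht => by
    rw [sub_eq_zero] at ht
    exact disjoint_left.1 hdis hw ⟨t, ht⟩
  obtain ⟨l, hl⟩ := aux_log_s18 (A := ℝ) ⟨fun t => e (projIcc a b hab t) - w, by fun_prop⟩
    (fun t => hew _)
  obtain ⟨L, hL⟩ := (ContinuousMap.mk (fun t : Icc a b => l t) (by fun_prop)).exists_extension' hcl
  have hL' : ∀ z ∈ range e, Complex.exp (L z) = z - w := by
    rintro _ ⟨t, rfl⟩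
    have := congrFun hL t
    simp only [Function.comp, ContinuousMap.coe_mk] at this
    rw [this, hl]; simp
  classical
  let F : ℂ → ℂ := fun z => if z ∈ W then Complex.exp (L z) else z - w
  have hF : Continuous F := by
    apply Continuous.if
    · intro z hz; exact hL' z (hfr hz)
    · fun_prop
    · fun_prop
  have hF0 : ∀ z, F z ≠ 0 := by
    intro z
    simp only [F]
    split_ifs with h
    · exact Complex.exp_ne_zero _
    · rw [sub_ne_zero]; rintro rfl; exact h hw
  obtain ⟨g, hg⟩ := aux_log_s18 ⟨F, hF⟩ hF0
  obtain ⟨R, hR⟩ := hb.subset_ball w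
  refine aux_no_log g w (max R 1) (by positivity) fun z hz => ?_
  rw [hg]
  have : z ∉ W := fun h => by
    have := hR h
    rw [mem_ball, hz] at this
    exact absurd this (not_lt.2 (le_max_left _ _))
  simp [F, this]

lemma aux_jordan_basic {Ω : Set E2} (hΩ : IsJordanDomain Ω) :
    IsOpen Ω ∧ IsConnected Ω ∧ Bornology.IsBounded Ω := by
  obtain ⟨γ, hγ, hinj, hb, x, hx, rfl⟩ := hΩ
  refine ⟨?_, ?_, hb⟩
  · exact (isCompact_range hγ).isClosed.isOpen_compl.connectedComponentIn
  · exact isConnected_connectedComponentIn_iff.2 hx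

lemma aux_frontier_component {J : Set E2} (hJ : IsClosed J) (x : E2) :
    frontier (connectedComponentIn Jᶜ x) ⊆ J := by
  intro z hz
  by_contra hzJ
  have ho : ∀ y, IsOpen (connectedComponentIn Jᶜ y) :=
    fun y => hJ.isOpen_compl.connectedComponentIn
  rw [frontier, (ho x).interior_eq] at hz
  have hzz : z ∈ connectedComponentIn Jᶜ z := mem_connectedComponentIn hzJ
  obtain ⟨y, hy1, hy2⟩ := mem_closure_iff.1 hz.1 _ (ho z) hzz
  have h1 := connectedComponentIn_eq hy1
  have h2 := connectedComponentIn_eq hy2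
  apply hz.2
  rw [h2, ← h1]; exact hzz

lemma aux_jordan_ext {Ω : Set E2} (hΩ : IsJordanDomain Ω) :
    frontier Ω ⊆ closure (closure Ω)ᶜ := by
  obtain ⟨hopen, hconn, -⟩ := aux_jordan_basic hΩ
  obtain ⟨γ, hγ, hinj, hb, x, hx, hΩe⟩ := hΩ
  have hJ : IsClosed (range γ) := (isCompact_range hγ).isClosed
  have hfr : frontier Ω ⊆ range γ := by rw [hΩe]; exact aux_frontier_component hJ x
  have hΩJ : ∀ z ∈ Ω, z ∉ range γ := by
    intro z hz; rw [hΩe] at hz; exact connectedComponentIn_subset _ _ hz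
  intro p hp
  by_contra hpc
  have hpB : p ∈ interior (closure Ω) := by
    rw [closure_compl] at hpc; exact not_not.1 hpc
  obtain ⟨c, rfl⟩ := hfr hp
  obtain ⟨t₀, rfl⟩ := QuotientAddGroup.mk_surjective c
  let f : ℝ → E2 := fun t => γ (t : AddCircle (1:ℝ))
  have hf : Continuous f := hγ.comp (AddCircle.continuous_mk' 1)
  have hpre : f ⁻¹' (interior (closure Ω)) ∈ nhds t₀ :=
    (isOpen_interior.preimage hf).mem_nhds hpB
  obtain ⟨δ, hδ, hball⟩ := Metric.mem_nhds_iff.1 hpre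
  obtain ⟨d, hd0, hdδ, hd4⟩ : ∃ d : ℝ, 0 < d ∧ d < δ ∧ d < 1/4 :=
    ⟨min δ (1/4) / 2, by positivity, by
      have := min_le_left δ (1/4); have : 0 < min δ (1/4) := by positivity
      linarith, by
      have := min_le_right δ (1/4)
      linarith⟩
  have hab : t₀ + d ≤ t₀ + 1 - d := by linarith
  let φ : E2 ≃ₜ ℂ := Complex.orthonormalBasisOneI.repr.symm.toHomeomorph
  let A : Set E2 := f '' Icc (t₀ + d) (t₀ + 1 - d)
  have hA : IsClosed A := (isCompact_Icc.image hf).isClosed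
  have hAJ : A ⊆ range γ := by rintro _ ⟨t, -, rfl⟩; exact ⟨_, rfl⟩
  have hJA : ∀ z ∈ range γ, z ∉ A → z ∈ interior (closure Ω) := by
    rintro _ ⟨c, rfl⟩ hzA
    have hc : c ∈ ((↑) : ℝ → AddCircle (1:ℝ)) '' Ico (t₀ - d) (t₀ - d + 1) := by
      have : Fact ((0:ℝ) < 1) := ⟨one_pos⟩
      rw [AddCircle.coe_image_Ico_eq]; trivial
    obtain ⟨t, ht, rfl⟩ := hc
    by_cases h : t < t₀ + d
    · apply hball
      rw [mem_ball, Real.dist_eq, abs_lt]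
      constructor <;> linarith [ht.1]
    · exact absurd ⟨t, ⟨by linarith, by linarith [ht.2]⟩, rfl⟩ hzA
  let W : Set E2 := closure Ω \ A
  have hclΩ : closure Ω ⊆ Ω ∪ range γ := by
    intro z hz
    by_cases h : z ∈ Ω
    · exact Or.inl h
    · right; apply hfr; rw [frontier, hopen.interior_eq]; exact ⟨hz, h⟩
  have hWo : IsOpen W := by
    have : W = (Ω ∪ interior (closure Ω)) \ A := by
      ext z; constructor
      · rintro ⟨h1, h2⟩
        refine ⟨?_, h2⟩
        rcases hclΩ h1 with h | h
        · exact Or.inl h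
        · exact Or.inr (hJA z h h2)
      · rintro ⟨h1 | h1, h2⟩
        · exact ⟨subset_closure h1, h2⟩
        · exact ⟨interior_subset h1, h2⟩
    rw [this]
    exact (hopen.union isOpen_interior).sdiff hA
  have hWfr : frontier W ⊆ A := by
    intro z hz
    rw [frontier, hWo.interior_eq] at hz
    by_contra h
    exact hz.2 ⟨closure_minimal sdiff_subset isClosed_closure hz.1, h⟩
  let e : Icc (t₀ + d) (t₀ + 1 - d) → ℂ := fun t => φ (f t)
  have hre : range e = φ '' A := by
    ext z; simp [e, A]
  have hW0 : φ '' W = ∅ := by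
    refine aux_arc e (φ.continuous.comp (hf.comp continuous_subtype_val)) ?_ ?_ ?_ ?_ hab
    · intro s t hst
      have h1 := hinj (φ.injective hst)
      have : Fact ((0:ℝ) < 1) := ⟨one_pos⟩
      apply Subtype.ext
      refine (AddCircle.coe_eq_coe_iff_of_mem_Ico (a := t₀) ?_ ?_).1 h1
      · exact ⟨by linarith [s.2.1], by linarith [s.2.2]⟩
      · exact ⟨by linarith [t.2.1], by linarith [t.2.2]⟩
    · have : Bornology.IsBounded W := hb.closure.subset sdiff_subset
      exact Complex.orthonormalBasisOneI.repr.symm.lipschitz.isBounded_image this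
    · rw [← φ.image_frontier, hre]; exact image_mono hWfr
    · rw [hre, disjoint_image_iff φ.injective]; exact disjoint_sdiff_left
  rw [image_eq_empty] at hW0
  obtain ⟨w, hw⟩ := hconn.nonempty
  have : w ∈ W := ⟨subset_closure hw, fun h => hΩJ w hw (hAJ h)⟩
  rw [hW0] at this; exact this

lemma aux_cone {G : Set E2} (hG : IsOpen G) {x : E2} (hx : x ∈ closure G) {ρ : ℝ} (hρ : 0 < ρ)
    (L : NNReal) (e : E2 ≃ᵢ E2)
    (h : ∀ y ∈ G ∩ ball x ρ, ∀ z ∈ ball x ρ, (e z) 1 < (e y) 1 - L * |(e z) 0 - (e y) 0| → z ∈ G) :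
    ∃ U ∈ nhds x, ∃ (f : ℝ → ℝ) (K : NNReal) (e : E2 ≃ᵢ E2),
    LipschitzWith K f ∧ e '' (G ∩ U) = (e '' U) ∩ {y : E2 | y 1 < f (y 0)} := by
  let T : ℝ → Set ℝ := fun t => (fun y => (e y) 1 - L * |t - (e y) 0|) '' (G ∩ ball x ρ)
  have hne : (G ∩ ball x ρ).Nonempty := by
    obtain ⟨y, hy1, hy2⟩ := mem_closure_iff.1 hx _ isOpen_ball (mem_ball_self hρ)
    exact ⟨y, hy2, hy1⟩
  have hTne : ∀ t, (T t).Nonempty := fun t => hne.image _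
  have hTb : ∀ t, BddAbove (T t) := by
    intro t
    refine ⟨‖e x‖ + ρ, ?_⟩
    rintro _ ⟨y, hy, rfl⟩
    have h1 : (e y) 1 ≤ ‖e y‖ := (le_abs_self _).trans (PiLp.norm_apply_le (e y) 1)
    have h2 : ‖e y‖ ≤ ‖e x‖ + ‖e y - e x‖ := by
      have := norm_add_le (e x) (e y - e x); simpa using this
    have h3 : ‖e y - e x‖ < ρ := by
      rw [← dist_eq_norm, e.dist_eq]; exact hy.2
    have h4 : 0 ≤ (L : ℝ) * |t - (e y) 0| := by positivity
    simp only
    linarith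
  let f : ℝ → ℝ := fun t => sSup (T t)
  refine ⟨ball x ρ, ball_mem_nhds x hρ, f, L, e, ?_, ?_⟩
  · apply LipschitzWith.of_le_add_mul
    intro s t
    apply csSup_le (hTne s)
    rintro _ ⟨y, hy, rfl⟩
    have h1 : (e y) 1 - L * |t - (e y) 0| ≤ f t := le_csSup (hTb t) ⟨y, hy, rfl⟩
    have h2 : |t - (e y) 0| ≤ |s - (e y) 0| + dist s t := by
      rw [Real.dist_eq, abs_sub_comm s t]
      have := abs_add_le (s - (e y) 0) (t - s)
      simpa using this
    have h3 := mul_le_mul_of_nonneg_left h2 L.2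
    simp only [NNReal.val_eq_coe] at h3
    simp only
    linarith
  · ext w
    constructor
    · rintro ⟨z, hz, rfl⟩
      refine ⟨⟨z, hz.2, rfl⟩, ?_⟩
      let k : ℝ → E2 := fun η => e.symm (e z + η • EuclideanSpace.single 1 1)
      have hk : Continuous k := e.symm.continuous.comp (by fun_prop)
      have hk0 : k 0 = z := by simp [k]
      have : k ⁻¹' (G ∩ ball x ρ) ∈ nhds 0 :=
        ((hG.inter isOpen_ball).preimage hk).mem_nhds (by rw [mem_preimage, hk0]; exact hz)
      obtain ⟨η, hη, hb⟩ := Metric.mem_nhds_iff.1 this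
      have hm : k (η / 2) ∈ G ∩ ball x ρ := hb (by
        rw [mem_ball, Real.dist_eq, sub_zero, abs_of_pos (by positivity)]; linarith)
      have h1 : (e (k (η/2))) 1 - L * |(e z) 0 - (e (k (η/2))) 0| ≤ f ((e z) 0) :=
        le_csSup (hTb _) ⟨_, hm, rfl⟩
      have h2 : (e (k (η/2))) 1 = (e z) 1 + η / 2 := by simp [k]
      have h3 : (e (k (η/2))) 0 = (e z) 0 := by simp [k]
      rw [h2, h3] at h1
      simp only [sub_self, abs_zero, mul_zero, sub_zero] at h1
      simp only [mem_ofPred_eq]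
      linarith
    · rintro ⟨⟨z, hz, rfl⟩, hw⟩
      refine ⟨z, ⟨?_, hz⟩, rfl⟩
      obtain ⟨_, ⟨y, hy, rfl⟩, hlt⟩ := exists_lt_of_lt_csSup (hTne _) hw
      exact h y hy z hz hlt

lemma aux_ball_cone (b : OrthonormalBasis (Fin 2) ℝ E2) {x c y z : E2} {r δ ρ L : ℝ}
    (hr : 0 < r) (hδ : 0 < δ) (hρδ : 6 * ρ ≤ δ) (hL1 : 1 ≤ L) (hL : 2 * r ≤ L * δ)
    (hx : δ ≤ inner ℝ (b 1) (x - c)) (hy : y ∈ ball c r) (hyx : y ∈ ball x ρ) (hzx : z ∈ ball x ρ)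
    (h : (b.repr z) 1 < (b.repr y) 1 - L * |(b.repr z) 0 - (b.repr y) 0|) : z ∈ ball c r := by
  have hn : ∀ u : E2, ‖u‖ ^ 2 = (b.repr u) 0 ^ 2 + (b.repr u) 1 ^ 2 := by
    intro u
    rw [← b.repr.norm_map u, EuclideanSpace.norm_sq_eq]; simp [Fin.sum_univ_two]
  have hcoord : ∀ (u : E2) (i : Fin 2), |(b.repr u) i| ≤ ‖u‖ := by
    intro u i
    rw [← b.repr.norm_map u]; exact PiLp.norm_apply_le (b.repr u) i
  rw [mem_ball, dist_eq_norm] at hy hyx hzx ⊢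
  have hw : ‖z - y‖ ≤ 2 * ρ := by
    have := norm_sub_le (z - x) (y - x)
    simp only [sub_sub_sub_cancel_right] at this
    linarith
  set p := (b.repr (y - c)) 0 with hp
  set q := (b.repr (y - c)) 1 with hq
  set β := (b.repr (z - y)) 0 with hβ
  set α := -(b.repr (z - y)) 1 with hα
  have hα1 : L * |β| < α := by
    simp only [hα, hβ, map_sub, PiLp.sub_apply]; linarith
  have hβ0 := abs_nonneg β
  have hαpos : 0 < α := lt_of_le_of_lt (by positivity) hα1
  have hβα : |β| ≤ α := by nlinarith
  have hα2 : α ≤ 2 * ρ := by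
    have := hcoord (z - y) 1
    have h2 := neg_le_abs ((b.repr (z - y)) 1)
    linarith
  have hpr : |p| ≤ r := (hcoord _ 0).trans hy.le
  have hqq : δ - ρ ≤ q := by
    have h1 : q = (b.repr (y - x)) 1 + inner ℝ (b 1) (x - c) := by
      rw [← b.repr_apply_apply, hq, ← PiLp.add_apply, ← map_add]; simp
    have h2 := hcoord (y - x) 1
    have h3 := neg_abs_le ((b.repr (y - x)) 1)
    linarith
  have h1 : ‖z - c‖ ^ 2 = (p + β) ^ 2 + (q - α) ^ 2 := by
    have : z - c = (y - c) + (z - y) := by abel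
    rw [this, hn, map_add, PiLp.add_apply, PiLp.add_apply]
    simp only [hα, hp, hq, hβ]; ring
  have h2 : ‖y - c‖ ^ 2 = p ^ 2 + q ^ 2 := hn _
  have hpβ : p * β ≤ α * (δ / 2) := by
    have a1 : p * β ≤ r * |β| := by
      calc p * β ≤ |p * β| := le_abs_self _
        _ = |p| * |β| := abs_mul _ _
        _ ≤ r * |β| := by gcongr
    have a2 : 2 * r * |β| ≤ L * δ * |β| := by gcongr
    have a3 : L * |β| * δ ≤ α * δ := by gcongr
    linarith
  have hβ2 : β ^ 2 ≤ 2 * ρ * α := by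
    rw [← sq_abs]; nlinarith
  have hα3 : α ^ 2 ≤ 2 * ρ * α := by nlinarith
  have hqα : (δ - ρ) * α ≤ q * α := by gcongr
  have hfin : ‖z - c‖ ^ 2 ≤ ‖y - c‖ ^ 2 := by
    rw [h1, h2]; nlinarith
  have := abs_le_of_sq_le_sq hfin (norm_nonneg _)
  rw [abs_of_nonneg (norm_nonneg _)] at this
  linarith

lemma aux_exists_basis (v : E2) (hv : ‖v‖ = 1) :
    ∃ b : OrthonormalBasis (Fin 2) ℝ E2, b 1 = v := by
  have ho : Orthonormal ℝ (({1} : Set (Fin 2)).domRestrict (fun _ => v)) := by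
    constructor
    · intro i; exact hv
    · intro i j hij; exact absurd (Subsingleton.elim i j) hij
  obtain ⟨b, hb⟩ := ho.exists_orthonormalBasis_extension_of_card_eq (by simp)
  exact ⟨b, hb 1 rfl⟩

lemma aux_lip {C : Finset E2} {r : ℝ} (hr : 0 < r)
    (hcrit : ∀ x, x ∉ convexHull ℝ {c : E2 | c ∈ C ∧ dist x c = r}) {x : E2}
    (hx : x ∈ frontier (⋃ c ∈ C, ball c r)) :
    ∃ U ∈ nhds x, ∃ (f : ℝ → ℝ) (K : NNReal) (e : E2 ≃ᵢ E2),
    LipschitzWith K f ∧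
      e '' ((⋃ c ∈ C, ball c r) ∩ U) = (e '' U) ∩ {y : E2 | y 1 < f (y 0)} := by
  have hGo : IsOpen (⋃ c ∈ C, ball c r) := isOpen_biUnion fun _ _ => isOpen_ball
  rw [frontier, hGo.interior_eq] at hx
  obtain ⟨hxc, hxG⟩ := hx
  have hge : ∀ c ∈ C, r ≤ dist x c := by
    intro c hc
    by_contra hlt
    exact hxG (mem_biUnion hc (not_le.1 hlt))
  let S : Set E2 := {c : E2 | c ∈ C ∧ dist x c = r}
  have hSf : S.Finite := C.finite_toSet.subset fun c hc => hc.1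
  have hSne : S.Nonempty := by
    have h1 : x ∈ ⋃ c ∈ C, closedBall c r := by
      have : IsClosed (⋃ c ∈ C, closedBall c r) :=
        C.finite_toSet.isClosed_biUnion fun _ _ => isClosed_closedBall
      refine closure_minimal ?_ this hxc
      exact iUnion₂_mono fun c _ => ball_subset_closedBall
    simp only [mem_iUnion] at h1
    obtain ⟨c, hc, hxc⟩ := h1
    exact ⟨c, hc, le_antisymm hxc (hge c hc)⟩
  obtain ⟨g, u, hgx, hgu⟩ := geometric_hahn_banach_point_closed (convex_convexHull ℝ S)
    (hSf.isCompact_convexHull (𝕜 := ℝ)).isClosed (hcrit x)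
  let v₀ : E2 := (InnerProductSpace.toDual ℝ E2).symm g
  have hv₀ : ∀ y, inner ℝ v₀ y = g y := fun y => InnerProductSpace.toDual_symm_apply
  have hS : ∀ c ∈ S, u - g x < inner ℝ v₀ (c - x) := by
    intro c hc
    have := hgu c (subset_convexHull ℝ S hc)
    rw [hv₀, map_sub]; linarith
  have hv0 : v₀ ≠ 0 := by
    intro h0
    obtain ⟨c, hc⟩ := hSne
    have := hS c hc
    rw [h0, inner_zero_left] at this
    linarith
  have hvn : 0 < ‖v₀‖ := norm_pos_iff.2 hv0
  obtain ⟨b, hb⟩ := aux_exists_basis (-(‖v₀‖⁻¹ • v₀)) (by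
    rw [norm_neg, norm_smul, norm_inv, norm_norm, inv_mul_cancel₀ hvn.ne'])
  set δ := ‖v₀‖⁻¹ * (u - g x) with hδd
  have hδ : 0 < δ := by
    have : 0 < u - g x := by linarith
    positivity
  have hSb : ∀ c ∈ S, δ ≤ inner ℝ (b 1) (x - c) := by
    intro c hc
    rw [hb, ← neg_sub c x, inner_neg_neg, real_inner_smul_left]
    have := (hS c hc).le
    rw [hδd]; gcongr
  obtain ⟨ρ, hρ0, hρδ, hρC⟩ : ∃ ρ : ℝ, 0 < ρ ∧ 6 * ρ ≤ δ ∧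
      ∀ c ∈ C, r < dist x c → r + ρ ≤ dist x c := by
    have h1 : ∀ᶠ ρ : ℝ in nhdsWithin 0 (Ioi 0), ∀ c ∈ C, r < dist x c → r + ρ ≤ dist x c := by
      rw [Filter.eventually_all_finset]
      intro c hc
      by_cases h : r < dist x c
      · have : ∀ᶠ ρ : ℝ in nhds 0, ρ < dist x c - r := eventually_lt_nhds (by linarith)
        filter_upwards [nhdsWithin_le_nhds this] with ρ hρ _
        linarith
      · exact Eventually.of_forall fun _ h' => absurd h' h
    have h2 : ∀ᶠ ρ : ℝ in nhdsWithin 0 (Ioi 0), ρ < δ / 6 :=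
      nhdsWithin_le_nhds (eventually_lt_nhds (by positivity))
    obtain ⟨ρ, ⟨h1, h2⟩, h3⟩ := ((h1.and h2).and self_mem_nhdsWithin).exists
    exact ⟨ρ, h3, by linarith, h1⟩
  let L : NNReal := ⟨max 1 (2 * r / δ), by positivity⟩
  refine aux_cone hGo hxc hρ0 L b.repr.toIsometryEquiv ?_
  rintro y ⟨hyG, hyx⟩ z hz hlt
  simp only [mem_iUnion] at hyG ⊢
  obtain ⟨c, hc, hyc⟩ := hyG
  refine ⟨c, hc, ?_⟩
  have hcS : c ∈ S := by
    refine ⟨hc, ?_⟩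
    by_contra hne
    have h1 := hρC c hc (lt_of_le_of_ne (hge c hc) (Ne.symm hne))
    have h2 := dist_triangle_left x c y
    rw [mem_ball] at hyx hyc
    linarith
  refine aux_ball_cone b (L := L) hr hδ hρδ (le_max_left _ _) ?_ (hSb c hcS) hyc hyx hz hlt
  have : 2 * r / δ ≤ (L : ℝ) := le_max_right _ _
  rwa [div_le_iff₀ hδ] at this

lemma aux_crit_unique (S : Set E2) : {r : ℝ | ∃ x ∈ convexHull ℝ S, ∀ c ∈ S, dist x c = r}.Subsingleton := by
  rintro r ⟨x, hx, hxS⟩ r' ⟨x', hx', hxS'⟩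
  have hne : S.Nonempty := convexHull_nonempty_iff.1 ⟨x, hx⟩
  let k : ℝ := (r ^ 2 - r' ^ 2 - ‖x‖ ^ 2 + ‖x'‖ ^ 2) / 2
  have hsub : convexHull ℝ S ⊆ {y | inner ℝ (x' - x) y = k} := by
    apply convexHull_min
    · intro s hs
      have h1 := hxS s hs
      have h2 := hxS' s hs
      rw [dist_eq_norm] at h1 h2
      have h3 := norm_sub_sq_real x s
      have h4 := norm_sub_sq_real x' s
      rw [h1] at h3; rw [h2] at h4
      simp only [mem_ofPred_eq, inner_sub_left, k]
      linarith
    · exact convex_hyperplane (innerₛₗ ℝ (x' - x)).isLinear k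
  have h1 := hsub hx
  have h2 := hsub hx'
  have h3 : inner ℝ (x' - x) (x' - x) = 0 := by
    rw [inner_sub_right]; simp only [mem_ofPred_eq] at h1 h2; linarith
  have h4 : x' = x := by
    rw [inner_self_eq_zero, sub_eq_zero] at h3; exact h3
  obtain ⟨s, hs⟩ := hne
  rw [← hxS s hs, ← hxS' s hs, h4]

lemma aux_exists_radius (C : Finset E2) {a b : ℝ} (hab : a < b) :
    ∃ r ∈ Ioo a b, ∀ x, x ∉ convexHull ℝ {c : E2 | c ∈ C ∧ dist x c = r} := by
  classical
  let B : Set ℝ := ⋃ S ∈ C.powerset,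
    {r : ℝ | ∃ x ∈ convexHull ℝ (S : Set E2), ∀ c ∈ (S : Set E2), dist x c = r}
  have hB : B.Finite := C.powerset.finite_toSet.biUnion fun S _ => (aux_crit_unique _).finite
  obtain ⟨r, hr, hrB⟩ := ((Ioo_infinite hab).sdiff hB).nonempty
  refine ⟨r, hr, fun x hx => hrB ?_⟩
  refine mem_biUnion (x := C.filter fun c => dist x c = r)
    (Finset.mem_coe.2 (Finset.mem_powerset.2 (Finset.filter_subset _ _))) ?_
  refine ⟨x, ?_, ?_⟩
  · simpa using hx
  · intro c hc; simp at hc; exact hc.2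

lemma aux_step {K : Set E2} (hK : IsCompact K) (hKc : IsConnected K) {U : Set E2} (hU : IsOpen U)
    (hKU : K ⊆ U) {ε : ℝ} (hε : 0 < ε) :
    ∃ G, IsLipschitzDomain G ∧ K ⊆ G ∧ closure G ⊆ U ∧ closure G ⊆ thickening ε K := by
  obtain ⟨ε₁, hε₁, hthick⟩ := hK.exists_thickening_subset_open hU hKU
  set η := min ε ε₁ with hη
  have hη0 : 0 < η := lt_min hε hε₁
  obtain ⟨t, htK, htf, hcov⟩ := hK.finite_cover_balls (half_pos hη0)
  obtain ⟨C, rfl⟩ := htf.exists_finset_coe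
  obtain ⟨r, ⟨hr1, hr2⟩, hcrit⟩ := aux_exists_radius C (half_lt_self hη0)
  have hr : 0 < r := by linarith
  have hKG : K ⊆ ⋃ c ∈ C, ball c r := by
    refine hcov.trans ?_
    exact iUnion₂_mono fun c _ => ball_subset_ball hr1.le
  have hcl : closure (⋃ c ∈ C, ball c r) ⊆ thickening η K := by
    have : IsClosed (⋃ c ∈ C, closedBall c r) :=
      C.finite_toSet.isClosed_biUnion fun _ _ => isClosed_closedBall
    refine (closure_minimal (iUnion₂_mono fun c _ => ball_subset_closedBall) this).trans ?_
    intro z hz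
    simp only [mem_iUnion] at hz
    obtain ⟨c, hc, hz⟩ := hz
    rw [mem_thickening_iff]
    exact ⟨c, htK hc, lt_of_le_of_lt hz hr2⟩
  refine ⟨⋃ c ∈ C, ball c r, ⟨?_, ?_, ?_, ?_⟩, hKG, ?_, ?_⟩
  · exact isOpen_biUnion fun _ _ => isOpen_ball
  · obtain ⟨k, hk⟩ := hKc.nonempty
    refine ⟨⟨k, hKG hk⟩, ?_⟩
    refine isPreconnected_of_forall k ?_
    intro y hy
    simp only [mem_iUnion] at hy
    obtain ⟨c, hc, hy⟩ := hy
    refine ⟨K ∪ ball c r, union_subset hKG (subset_biUnion_of_mem (u := fun c => ball c r) hc),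
      Or.inl hk, Or.inr hy, ?_⟩
    exact hKc.isPreconnected.union c (htK hc) (mem_ball_self hr)
      (convex_ball c r).isPreconnected
  · exact (hK.isBounded.thickening (δ := η)).subset (subset_closure.trans hcl)
  · intro x hx; exact aux_lip hr hcrit hx
  · exact hcl.trans ((thickening_mono (min_le_right _ _) _).trans hthick)
  · exact hcl.trans (thickening_mono (min_le_left _ _) _)

lemma aux_seq {K : Set E2} (hK : IsCompact K) (hKc : IsConnected K) :
    ∃ G : ℕ → Set E2, (∀ s, IsLipschitzDomain (G s)) ∧ (∀ s, K ⊆ G s) ∧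
      (∀ s, closure (G (s + 1)) ⊆ G s) ∧
      ∀ s : ℕ, closure (G s) ⊆ thickening (1 / ((s : ℝ) + 1)) K := by
  let P := {U : Set E2 // IsOpen U ∧ K ⊆ U}
  have hstep : ∀ (U : P) (n : ℕ), ∃ V : P, IsLipschitzDomain V.1 ∧ closure V.1 ⊆ U.1 ∧
      closure V.1 ⊆ thickening (1 / ((n : ℝ) + 1)) K := by
    intro U n
    obtain ⟨G, h1, h2, h3, h4⟩ := aux_step hK hKc U.2.1 U.2.2 (ε := 1 / ((n : ℝ) + 1))
      (by positivity)
    exact ⟨⟨G, h1.1, h2⟩, h1, h3, h4⟩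
  choose V hV1 hV2 hV3 using hstep
  let G : ℕ → P := fun n => Nat.rec (V ⟨univ, isOpen_univ, subset_univ _⟩ 0)
    (fun n U => V U (n + 1)) n
  have hG : ∀ n, ∃ U : P, G n = V U n := by
    intro n
    cases n with
    | zero => exact ⟨_, rfl⟩
    | succ n => exact ⟨G n, rfl⟩
  refine ⟨fun n => (G n).1, ?_, fun s => (G s).2.2, ?_, ?_⟩
  · intro s; obtain ⟨U, hU⟩ := hG s; simp only [hU]; exact hV1 _ _
  · intro s; exact hV2 (G s) (s + 1)
  · intro s; obtain ⟨U, hU⟩ := hG s; simp only [hU]; exact hV3 _ _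

lemma aux_segment {s : Set E2} {p q : E2} (hp : p ∈ s) (hq : q ∉ s) :
    ∃ y ∈ frontier s, dist p y ≤ dist p q ∧ dist q y ≤ dist p q := by
  obtain ⟨y, hy1, hy2⟩ := aux_crossing (convex_segment (𝕜 := ℝ) p q).isPreconnected
    ⟨p, left_mem_segment ℝ p q, hp⟩ ⟨q, right_mem_segment ℝ p q, hq⟩
  have h := dist_add_dist_of_mem_segment hy1
  refine ⟨y, hy2, ?_, ?_⟩
  · linarith [dist_nonneg (x := y) (y := q)]
  · rw [dist_comm q y]; linarith [dist_nonneg (x := p) (y := y)]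

/-- every Jordan domain `Ω` admits a decreasing sequence of Lipschitz
domains `G_s` with `Ω ⊂⊂ G_{s+1} ⊂⊂ G_s` and `dist_H(∂G_s, ∂Ω) → 0`. -/
theorem stmt18 (Ω : Set E2) (hΩ : IsJordanDomain Ω) :
    ∃ G : ℕ → Set E2, (∀ s, IsLipschitzDomain (G s)) ∧
      (∀ s, closure Ω ⊆ G (s + 1) ∧ closure (G (s + 1)) ⊆ G s) ∧
      Tendsto (fun s => Metric.hausdorffDist (frontier (G s)) (frontier Ω))
        atTop (nhds 0) := by
  obtain ⟨ho, hc, hb⟩ := aux_jordan_basic hΩ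
  have hext := aux_jordan_ext hΩ
  have hK : IsCompact (closure Ω) := hb.isCompact_closure
  obtain ⟨G, hG1, hG2, hG3, hG4⟩ := aux_seq hK hc.closure
  refine ⟨G, hG1, fun s => ⟨hG2 _, hG3 s⟩, ?_⟩
  have hsmall : ∀ ε : ℝ, 0 < ε → ∀ᶠ s : ℕ in atTop, 1 / ((s : ℝ) + 1) < ε := fun ε hε =>
    tendsto_one_div_add_atTop_nhds_zero_nat.eventually (gt_mem_nhds hε)
  have hmain : ∀ ε : ℝ, 0 < ε → ∀ᶠ s in atTop,
      hausdorffDist (frontier (G s)) (frontier Ω) ≤ ε := by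
    intro ε hε
    have hfc : IsCompact (frontier Ω) := hK.of_isClosed_subset isClosed_frontier
      frontier_subset_closure
    obtain ⟨t, ht, htf, hcov⟩ := hfc.finite_cover_balls (half_pos hε)
    have hq : ∀ᶠ s in atTop, ∀ p ∈ t, ∃ q, dist p q < ε / 2 ∧ q ∉ G s := by
      rw [Filter.eventually_all_finite htf]
      intro p hp
      obtain ⟨q, hq1, hq2⟩ := Metric.mem_closure_iff.1 (hext (ht hp)) _ (half_pos hε)
      have hpos : 0 < infDist q (closure Ω) :=
        (isClosed_closure.notMem_iff_infDist_pos hc.nonempty.closure).1 hq1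
      filter_upwards [hsmall _ hpos] with s hs
      refine ⟨q, hq2, fun hqG => ?_⟩
      have := hG4 s (subset_closure hqG)
      rw [mem_thickening_iff_infDist_lt hc.nonempty.closure] at this
      linarith
    filter_upwards [hq, hsmall ε hε] with s hs1 hs2
    apply hausdorffDist_le_of_mem_dist hε.le
    · intro x hx
      have hxG : x ∉ closure Ω := by
        rw [frontier, (hG1 s).1.interior_eq] at hx
        exact fun h => hx.2 (hG2 s h)
      have := hG4 s (frontier_subset_closure hx)
      rw [mem_thickening_iff] at this
      obtain ⟨k, hk, hxk⟩ := this
      obtain ⟨y, hy, -, h2⟩ := aux_segment hk hxG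
      refine ⟨y, frontier_closure_subset hy, ?_⟩
      rw [dist_comm] at hxk; linarith
    · intro p hp
      have h1 := hcov hp
      simp only [mem_iUnion] at h1
      obtain ⟨p', hp', hpp'⟩ := h1
      obtain ⟨q, hq1, hq2⟩ := hs1 p' hp'
      obtain ⟨y, hy, h2, -⟩ := aux_segment (hG2 s (frontier_subset_closure hp)) hq2
      refine ⟨y, hy, ?_⟩
      have := dist_triangle p p' q
      rw [mem_ball] at hpp'
      linarith
  rw [Metric.tendsto_atTop']
  intro ε hε
  obtain ⟨N, hN⟩ := eventually_atTop.1 (hmain (ε / 2) (half_pos hε))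
  refine ⟨N, fun n hn => ?_⟩
  rw [Real.dist_eq, sub_zero, abs_of_nonneg hausdorffDist_nonneg]
  linarith [hN n hn.le]
end
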